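/- Let 𝐅 = (F_1,…,F_d) be a d-tuple of continuous cdfs on ℝ with F_{i-1} ≥ F_i pointwise for all 2 ≤ i ≤ d, let C ∈ C^OS(𝐅), and let U be a random vector with cdf S_𝐅(C). Then the multidiagonal δ^𝐅 = (δ_(1),…,δ_(d)) of S_𝐅(C) (i.e. the one-dimensional marginal cdfs of the order statistics U^OS of U) does not depend on C and satisfies δ_{(i)} = F_i ∘ G^{-1} and δ_{(i)}^{-1} = G ∘ F_i^{-1} for 1 ≤ i ≤ d, where G = (1/d) Σ_{i=1}^d F_i. Furthermore, C is the unique copula of U^OS. -/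

import Mathlib

/-!
Let `X ∼ μ` be an order statistic with continuous marginal cdfs `F` and copula `C`, and let `G` be
the average of the `F i`. By Sklar's theorem `joinCopula F C = μ`, and every marginal of `X_Π` has
cdf `G`, so `S_F(C)` is the law of `(G(X_Π(1)), …, G(X_Π(d)))`. As `X` is almost surely
nondecreasing and `G` is nondecreasing, sorting undoes the permutation: `U^OS` has the law of
`(G(X_1), …, G(X_d))`. In particular `δ_(i)` is the law of `G(X_i)`, which depends on `F` only.

The increments of the `F i` are nonnegative and sum to those of `d G`, so `F i` is constant on each
level set of `G`, which makes the level sets null and the law of `G(X_i)` atomless. Hence, up to a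
null set, `G(X_i) ≤ G(x)` means `X_i ≤ x`. It follows that `δ_(i) = F_i ∘ G⁻¹`, and that applying
`G` to each coordinate of `X` does not change the copula, which is unique because the `δ_(i)` are
continuous. Finally `δ_(i)⁻¹ = G ∘ F_i⁻¹`, because quantiles commute with continuous nondecreasing
maps.
-/

/- Formalization framework for "Maximum entropy distribution of order statistics with given
marginals" (Butucea, Delmas, Dutfoy, Fischer).  One-dimensional cdfs are identified with
(probability) measures on `ℝ`, and cdfs on `ℝ^d` with measures on `Fin d → ℝ`. -/

open MeasureTheory Set
open scoped ENNReal

noncomputable section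

namespace MaxEntOS

variable {d : ℕ}

/-- The cumulative distribution function of a measure on `ℝ`. -/
def cdf1 (ν : Measure ℝ) (t : ℝ) : ℝ := (ν (Iic t)).toReal

/-- The cdf extended to `EReal` arguments (so that `cdfE ν ⊥ = 0` and `cdfE ν ⊤ = ν ℝ`). -/
def cdfE (ν : Measure ℝ) (x : EReal) : ℝ := (ν {s : ℝ | (s : EReal) ≤ x}).toReal

/-- The generalized inverse (quantile function) of the cdf of `ν`, real-valued. -/
def qReal (ν : Measure ℝ) (t : ℝ) : ℝ := sInf {s : ℝ | t ≤ cdf1 ν s}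

/-- The generalized inverse of a nondecreasing function `g : ℝ → ℝ`, `EReal`-valued, with the
conventions `inf ∅ = ⊤` and `inf ℝ = ⊥`. -/
def qInvE (g : ℝ → ℝ) (t : ℝ) : EReal := sInf ((fun s : ℝ => (s : EReal)) '' {s : ℝ | t ≤ g s})

open scoped Classical in
/-- The differential entropy (with respect to Lebesgue measure) of a measure, with values in
`EReal` : it equals `⊥` if the measure is not absolutely continuous, and otherwise it is
`−∫ f log f`, computed as the difference of the lower integrals of the negative and positive
parts of `f log f`, where `f` is the density. -/
def dEntropy {α : Type*} [MeasureSpace α] (μ : Measure α) : EReal :=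
  if μ ≪ (volume : Measure α) then
    ((∫⁻ x, ENNReal.ofReal
        (-((μ.rnDeriv volume x).toReal * Real.log ((μ.rnDeriv volume x).toReal))) : ℝ≥0∞) : EReal)
      - ((∫⁻ x, ENNReal.ofReal
        ((μ.rnDeriv volume x).toReal * Real.log ((μ.rnDeriv volume x).toReal)) : ℝ≥0∞) : EReal)
  else ⊥

/-- The nondecreasing rearrangement (order statistics) of a tuple. -/
def orderStat (x : Fin d → ℝ) : Fin d → ℝ := fun i => x (Tuple.sort x i)

/-- The `i`-th one-dimensional marginal of a measure on `ℝ^d`. -/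
def marg (μ : Measure (Fin d → ℝ)) (i : Fin d) : Measure ℝ := μ.map fun x => x i

/-- The multidiagonal of a measure on `ℝ^d` : the tuple of one-dimensional marginals of the
order statistics. -/
def multidiag (μ : Measure (Fin d → ℝ)) (i : Fin d) : Measure ℝ := μ.map fun x => orderStat x i

/-- The uniform distribution on `[0,1]`. -/
def uniform01 : Measure ℝ := (volume : Measure ℝ).restrict (Icc 0 1)

/-- A copula : a probability measure on `ℝ^d` whose one-dimensional marginals are all uniform
on `[0,1]`. -/
def IsCopula (μ : Measure (Fin d → ℝ)) : Prop :=
  IsProbabilityMeasure μ ∧ ∀ i, marg μ i = uniform01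

/-- A measure on `ℝ^d` is symmetric (exchangeable) if it is invariant under permutations of the
coordinates. -/
def IsSymmetric (μ : Measure (Fin d → ℝ)) : Prop :=
  ∀ π : Equiv.Perm (Fin d), μ.map (fun x => fun i => x (π i)) = μ

/-- `δ` belongs to `D` : it is the multidiagonal of some copula. -/
def IsMultidiag (δ : Fin d → Measure ℝ) : Prop :=
  ∃ μ : Measure (Fin d → ℝ), IsCopula μ ∧ multidiag μ = δ

/-- `δ` belongs to `D^0` : it is the multidiagonal of some absolutely continuous copula. -/
def IsMultidiag0 (δ : Fin d → Measure ℝ) : Prop :=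
  ∃ μ : Measure (Fin d → ℝ), IsCopula μ ∧ μ ≪ (volume : Measure (Fin d → ℝ)) ∧ multidiag μ = δ

/-- `F ∈ F_d` : `F` is a `d`-tuple of continuous one-dimensional cdfs (identified with atomless
probability measures on `ℝ`) which are stochastically ordered : `F (i-1) ≥ F i` pointwise. -/
structure IsMargOS [NeZero d] (F : Fin d → Measure ℝ) : Prop where
  prob : ∀ i, IsProbabilityMeasure (F i)
  cont : ∀ i, ∀ t : ℝ, F i {t} = 0
  ord : ∀ i : Fin d, i ≠ 0 → ∀ t : ℝ, cdf1 (F i) t ≤ cdf1 (F (i - 1)) t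

/-- `μ ∈ L^OS_d(F)` : `μ` is the distribution of a `d`-dimensional order statistic (an almost
surely nondecreasing random vector) with one-dimensional marginals `F`. -/
def IsCdfOS (F : Fin d → Measure ℝ) (μ : Measure (Fin d → ℝ)) : Prop :=
  IsProbabilityMeasure μ ∧ μ {x | Monotone x} = 1 ∧ ∀ i, marg μ i = F i

/-- `F ∈ F_d^0` : there exists an absolutely continuous distribution of order statistics with
one-dimensional marginals `F`. -/
def IsMargOS0 [NeZero d] (F : Fin d → Measure ℝ) : Prop :=
  IsMargOS F ∧ ∃ μ : Measure (Fin d → ℝ), IsCdfOS F μ ∧ μ ≪ (volume : Measure (Fin d → ℝ))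

/-- The functional `J(F) = ∑_{i=2}^d ∫ |log (F_{i-1}(t) − F_i(t))| dF_i(t) ∈ [0,∞]`. -/
def Jfun [NeZero d] (F : Fin d → Measure ℝ) : ℝ≥0∞ :=
  ∑ i : Fin d, if i = 0 then 0 else
    ∫⁻ t, ENNReal.ofReal |Real.log (cdf1 (F (i - 1)) t - cdf1 (F i) t)| ∂(F i)

/-- The copula of a measure on `ℝ^d` (for continuous marginals this is the unique copula
provided by Sklar's theorem) : the law of `(F_1(X_1), …, F_d(X_d))`. -/
def copulaOf (μ : Measure (Fin d → ℝ)) : Measure (Fin d → ℝ) :=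
  μ.map fun x => fun i => cdf1 (marg μ i) (x i)

/-- The set `C^{OS}(F)` of copulas of distributions of order statistics with marginal
cdfs `F`. -/
def copulaOS (F : Fin d → Measure ℝ) : Set (Measure (Fin d → ℝ)) :=
  {C | ∃ μ, IsCdfOS F μ ∧ copulaOf μ = C}

/-- The joint distribution with one-dimensional marginals `F` and copula `C` : the law of
`(F_1^{-1}(U_1), …, F_d^{-1}(U_d))` where `U ∼ C`. -/
def joinCopula (F : Fin d → Measure ℝ) (C : Measure (Fin d → ℝ)) : Measure (Fin d → ℝ) :=
  C.map fun u => fun i => qReal (F i) (u i)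

/-- The law of `X_Π`, where `X ∼ μ` and `Π` is an independent uniform random permutation of
`{1, …, d}`. -/
def symmetrize (μ : Measure (Fin d → ℝ)) : Measure (Fin d → ℝ) :=
  (d.factorial : ℝ≥0∞)⁻¹ • ∑ π : Equiv.Perm (Fin d), μ.map (fun x => fun i => x (π i))

/-- The symmetrizing operator `S_F` on copulas : `S_F(C)` is the copula of `X_Π` where `X` has
one-dimensional marginals `F` and copula `C`, and `Π` is an independent uniform random
permutation. -/
def SF (F : Fin d → Measure ℝ) (C : Measure (Fin d → ℝ)) : Measure (Fin d → ℝ) :=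
  copulaOf (symmetrize (joinCopula F C))

/-- The average cdf `G = (1/d) ∑_{i=1}^d F_i`. -/
def Gbar (F : Fin d → Measure ℝ) (t : ℝ) : ℝ := (∑ i, cdf1 (F i) t) / d

/-- `G` extended to `EReal` arguments (`GbarE F ⊥ = 0` and `GbarE F ⊤ = 1` for probability
measures). -/
def GbarE (F : Fin d → Measure ℝ) (x : EReal) : ℝ := (∑ i, cdfE (F i) x) / d

/-- The multidiagonal `δ^F` associated to the marginals `F`, as a tuple of measures : the law
of `G(X_i)` where `X_i ∼ F_i`, whose cdf is `F_i ∘ G^{-1}`. -/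
def mdiagF (F : Fin d → Measure ℝ) (i : Fin d) : Measure ℝ := (F i).map (Gbar F)

/-- `C` is a copula of the measure `ν` on `ℝ^d` : `C` is a copula and `ν` is the joint
distribution with the marginals of `ν` and copula `C`. -/
def IsCopulaOf (C ν : Measure (Fin d → ℝ)) : Prop :=
  IsCopula C ∧ ν = joinCopula (marg ν) C

/-- The extended tuple of multidiagonal cdfs, with the conventions `δ_(0) = 1` and
`δ_(d+1) = 0`; the natural index `i ∈ {1, …, d}` corresponds to `δ_(i)`. -/
def dcdf (δ : Fin d → Measure ℝ) (i : ℕ) (t : ℝ) : ℝ :=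
  if h0 : i = 0 then 1
  else if h : i ≤ d then cdf1 (δ ⟨i - 1, by omega⟩) t
  else 0

/-- The open set `Ψ^δ_i = {t ∈ (0,1) : δ_(i-1)(t) > δ_(i)(t)}`, for `1 ≤ i ≤ d+1`
(with the conventions `δ_(0) = 1` and `δ_(d+1) = 0`). -/
def Psi (δ : Fin d → Measure ℝ) (i : ℕ) : Set ℝ :=
  Ioo 0 1 ∩ {t | dcdf δ i t < dcdf δ (i - 1) t}

/-- Left endpoint of the connected component of `U` containing `t`. -/
def lend (U : Set ℝ) (t : ℝ) : ℝ := sSup {s | s ≤ t ∧ s ∉ U}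

/-- Right endpoint of the connected component of `U` containing `t`. -/
def rend (U : Set ℝ) (t : ℝ) : ℝ := sInf {s | t ≤ s ∧ s ∉ U}

/-- Midpoint `m_i^{(j)}` of the connected component of `U` containing `t`. -/
def midpt (U : Set ℝ) (t : ℝ) : ℝ := (lend U t + rend U t) / 2

/-- The integrand `δ'_(i)(s) / (δ_(i-1)(s) − δ_(i)(s))` (that is, `K'_i`). -/
def kInt (δ : Fin d → Measure ℝ) (i : ℕ) (s : ℝ) : ℝ :=
  deriv (dcdf δ i) s / (dcdf δ (i - 1) s - dcdf δ i s)

/-- `K_i(t)`, integrating `K'_i` from the midpoint of the connected component of `Ψ^δ_i`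
containing `t` (note `K_{d+1} = 0` holds automatically, `δ_(d+1)` being constant). -/
def Kfun (δ : Fin d → Measure ℝ) (i : ℕ) (t : ℝ) : ℝ :=
  ∫ s in (midpt (Psi δ i) t)..t, kInt δ i s

/-- The function `a_i(t) = K'_i(t) e^{K_{i+1}(t) − K_i(t)} 1_{Ψ^δ_i ∩ Ψ^δ_{i+1}}(t)`. -/
def aFun (δ : Fin d → Measure ℝ) (i : ℕ) : ℝ → ℝ :=
  (Psi δ i ∩ Psi δ (i + 1)).indicator fun t =>
    kInt δ i t * Real.exp (Kfun δ (i + 1) t - Kfun δ i t)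

/-- The set `L_δ` of `u ∈ [0,1]^d` such that `(u_(i-1), u_(i)) ⊆ Ψ^δ_i` for all `2 ≤ i ≤ d`. -/
def Lset [NeZero d] (δ : Fin d → Measure ℝ) : Set (Fin d → ℝ) :=
  {u | (∀ j, u j ∈ Icc (0 : ℝ) 1) ∧
    ∀ i : Fin d, i ≠ 0 → Ioo (orderStat u (i - 1)) (orderStat u i) ⊆ Psi δ (i.val + 1)}

/-- The density `c_δ(u) = (1/d!) 1_{L_δ}(u) ∏_{i=1}^d a_i(u_(i))` of the maximum entropy copula
with multidiagonal `δ`. -/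
def cDelta [NeZero d] (δ : Fin d → Measure ℝ) : (Fin d → ℝ) → ℝ :=
  (Lset δ).indicator fun u =>
    (d.factorial : ℝ)⁻¹ * ∏ i : Fin d, aFun δ (i.val + 1) (orderStat u i)

/-- The maximum entropy copula `C_δ` with multidiagonal `δ` : the measure with density `c_δ`. -/
def CDelta [NeZero d] (δ : Fin d → Measure ℝ) : Measure (Fin d → ℝ) :=
  (volume : Measure (Fin d → ℝ)).withDensity fun u => ENNReal.ofReal (cDelta δ u)

/-- The density of a one-dimensional measure `ν` with respect to Lebesgue measure. -/
def densOf (ν : Measure ℝ) (t : ℝ) : ℝ := (ν.rnDeriv volume t).toReal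

/-- The function `ℓ_i(t) = f_i(t) / (F_{i-1}(t) − F_i(t))`. -/
def ellF [NeZero d] (F : Fin d → Measure ℝ) (i : Fin d) (t : ℝ) : ℝ :=
  densOf (F i) t / (cdf1 (F (i - 1)) t - cdf1 (F i) t)

/-- The set `L^F` of ordered vectors `x ∈ ℝ^d` such that `F_{i-1}(t) > F_i(t)` for all
`t ∈ (x_{i-1}, x_i)` and all `2 ≤ i ≤ d`. -/
def LsetF [NeZero d] (F : Fin d → Measure ℝ) : Set (Fin d → ℝ) :=
  {x | Monotone x ∧ ∀ i : Fin d, i ≠ 0 →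
    ∀ t ∈ Ioo (x (i - 1)) (x i), cdf1 (F i) t < cdf1 (F (i - 1)) t}

/-- The density `f_F` of the maximum entropy distribution of order statistics with marginal
cdfs `F` :
`f_F(x) = f_1(x_1) ∏_{i=2}^d ℓ_i(x_i) exp(−∫_{x_{i-1}}^{x_i} ℓ_i(s) ds) 1_{L^F}(x)`. -/
def fF [NeZero d] (F : Fin d → Measure ℝ) : (Fin d → ℝ) → ℝ :=
  (LsetF F).indicator fun x =>
    densOf (F 0) (x 0) *
      ∏ i ∈ Finset.univ.erase (0 : Fin d),
        ellF F i (x i) * Real.exp (-∫ s in (x (i - 1))..(x i), ellF F i s)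

section Quantile

variable {g : ℝ → ℝ} {t x : ℝ}

lemma qInvE_mono (g : ℝ → ℝ) : Monotone (qInvE g) := fun _ _ hst =>
  sInf_le_sInf (image_mono fun _ hs => hst.trans hs)

lemma qInvE_le_coe (h : t ≤ g x) : qInvE g t ≤ x := sInf_le ⟨x, h, rfl⟩

lemma apply_lt_of_coe_lt_qInvE (h : (x : EReal) < qInvE g t) : g x < t := by
  contrapose! h
  exact qInvE_le_coe h

lemma coe_le_qInvE (hg : Monotone g) (h : g x < t) : (x : EReal) ≤ qInvE g t := by
  refine le_sInf ?_
  rintro _ ⟨s, hs, rfl⟩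
  exact EReal.coe_le_coe (hg.reflect_lt (h.trans_le hs)).le

lemma qInvE_eq_coe_of_forall_le_iff {a : ℝ} (h : ∀ s, t ≤ g s ↔ a ≤ s) : qInvE g t = a := by
  refine le_antisymm (qInvE_le_coe ((h a).2 le_rfl)) (le_sInf ?_)
  rintro _ ⟨s, hs, rfl⟩
  exact EReal.coe_le_coe ((h s).1 hs)

-- If `s` is empty or unbounded below, both sides take the junk value `0`.
lemma toReal_sInf_image_coe (s : Set ℝ) :
    (sInf ((fun x : ℝ => (x : EReal)) '' s)).toReal = sInf s := by
  rcases s.eq_empty_or_nonempty with rfl | hne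
  · simp
  by_cases hs : BddBelow s
  · rw [← EReal.coe_strictMono.monotone.map_csInf_of_continuousAt
      continuous_coe_real_ereal.continuousAt hne hs, EReal.toReal_coe]
  · rw [Real.sInf_of_not_bddBelow hs, EReal.toReal_eq_zero_iff]
    refine Or.inr (Or.inr (sInf_eq_bot.2 fun b hb => ?_))
    obtain ⟨r, -, hr⟩ := EReal.lt_iff_exists_real_btwn.1 hb
    obtain ⟨x, hxs, hxr⟩ := not_bddBelow_iff.1 hs r
    exact ⟨x, mem_image_of_mem _ hxs, (EReal.coe_lt_coe hxr).trans hr⟩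

lemma qReal_eq_toReal_qInvE (ν : Measure ℝ) (t : ℝ) :
    qReal ν t = (qInvE (cdf1 ν) t).toReal :=
  (toReal_sInf_image_coe _).symm

@[fun_prop]
lemma measurable_qReal (ν : Measure ℝ) : Measurable (qReal ν) := by
  rw [funext (qReal_eq_toReal_qInvE ν)]
  exact (qInvE_mono _).measurable.ereal_toReal

end Quantile

section Cdf

open Filter Topology

variable (ν : Measure ℝ)

lemma cdfE_coe (x : ℝ) : cdfE ν x = cdf1 ν x := by
  simp only [cdfE, cdf1, EReal.coe_le_coe_iff, Iic_def]

lemma cdfE_bot : cdfE ν ⊥ = 0 := by simp [cdfE]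

lemma cdfE_top [IsProbabilityMeasure ν] : cdfE ν ⊤ = 1 := by simp [cdfE]

lemma cdfE_mono [IsFiniteMeasure ν] : Monotone (cdfE ν) := fun _ _ hxy =>
  measureReal_mono fun _ hs => le_trans hs hxy

lemma cdf1_mono [IsFiniteMeasure ν] : Monotone (cdf1 ν) := fun _ _ hxy =>
  measureReal_mono (Iic_subset_Iic.2 hxy)

@[fun_prop]
lemma measurable_cdf1 [IsFiniteMeasure ν] : Measurable (cdf1 ν) := (cdf1_mono ν).measurable

lemma cdf1_le_one [IsProbabilityMeasure ν] (x : ℝ) : cdf1 ν x ≤ 1 := measureReal_le_one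

lemma cdf1_map {g : ℝ → ℝ} (hg : Measurable g) (t : ℝ) :
    cdf1 (ν.map g) t = ν.real {y | g y ≤ t} :=
  map_measureReal_apply hg measurableSet_Iic

lemma continuousWithinAt_cdfE_of_ae [IsFiniteMeasure ν] {s : Set EReal} {x : EReal}
    (h : ∀ᵐ y : ℝ ∂ν, ∀ᶠ z in 𝓝[s] x, (y : EReal) ≤ z ↔ (y : EReal) ≤ x) :
    ContinuousWithinAt (cdfE ν) s x := by
  have hmeas (z : EReal) : MeasurableSet {y : ℝ | (y : EReal) ≤ z} :=
    measurableSet_Iic.preimage measurable_coe_real_ereal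
  exact (ENNReal.tendsto_toReal (measure_ne_top ν _)).comp
    (tendsto_measure_of_ae_tendsto_indicator_of_isFiniteMeasure _ (hmeas x) hmeas h)

lemma continuousWithinAt_cdfE_Ici [IsFiniteMeasure ν] (x : EReal) :
    ContinuousWithinAt (cdfE ν) (Ici x) x := by
  refine continuousWithinAt_cdfE_of_ae ν (ae_of_all ν fun y => ?_)
  rcases le_or_gt (y : EReal) x with hyx | hxy
  · filter_upwards [self_mem_nhdsWithin] with z hz
    exact iff_of_true (hyx.trans hz) hyx
  · filter_upwards [mem_nhdsWithin_of_mem_nhds (Iio_mem_nhds hxy)] with z hz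
    exact iff_of_false (not_le.2 hz) (not_le.2 hxy)

lemma le_cdfE_qInvE [IsProbabilityMeasure ν] {t : ℝ} (ht : t ≤ 1) :
    t ≤ cdfE ν (qInvE (cdf1 ν) t) := by
  rcases {s | t ≤ cdf1 ν s}.eq_empty_or_nonempty with hempty | hne
  · rwa [qInvE, hempty, image_empty, sInf_empty, cdfE_top]
  · set S := (fun s : ℝ => (s : EReal)) '' {s | t ≤ cdf1 ν s}
    have hright : ContinuousWithinAt (cdfE ν) S (sInf S) :=
      (continuousWithinAt_cdfE_Ici ν _).mono fun _ => sInf_le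
    have hmem : sInf S ∈ closure S := sInf_mem_closure (hne.image _)
    have : (𝓝[S] sInf S).NeBot := mem_closure_iff_nhdsWithin_neBot.1 hmem
    refine ge_of_tendsto hright ?_
    filter_upwards [self_mem_nhdsWithin]
    rintro _ ⟨s, hs, rfl⟩
    rwa [cdfE_coe]

lemma bot_lt_qInvE_cdf1 [IsProbabilityMeasure ν] {t : ℝ} (ht : t ∈ Ioc (0 : ℝ) 1) :
    ⊥ < qInvE (cdf1 ν) t := by
  refine bot_lt_iff_ne_bot.2 fun h => ht.1.not_ge ?_
  simpa only [h, cdfE_bot] using le_cdfE_qInvE ν ht.2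

lemma qInvE_cdf1_le_coe_iff [IsProbabilityMeasure ν] {t x : ℝ} (ht : t ≤ 1) :
    qInvE (cdf1 ν) t ≤ x ↔ t ≤ cdf1 ν x :=
  ⟨fun h => (le_cdfE_qInvE ν ht).trans ((cdfE_mono ν h).trans_eq (cdfE_coe ν x)), qInvE_le_coe⟩

lemma tendsto_cdf1_atTop [IsProbabilityMeasure ν] : Tendsto (cdf1 ν) atTop (𝓝 1) :=
  (ProbabilityTheory.tendsto_cdf_atTop ν).congr (ProbabilityTheory.cdf_eq_real ν)

lemma coe_qReal [IsProbabilityMeasure ν] {t : ℝ} (ht : t ∈ Ioo (0 : ℝ) 1) :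
    (qReal ν t : EReal) = qInvE (cdf1 ν) t := by
  obtain ⟨x, hx⟩ := ((tendsto_cdf1_atTop ν).eventually_const_le ht.2).exists
  rw [qReal_eq_toReal_qInvE, EReal.coe_toReal]
  · exact ((qInvE_le_coe hx).trans_lt (EReal.coe_lt_top x)).ne
  · exact (bot_lt_qInvE_cdf1 ν (Ioo_subset_Ioc_self ht)).ne'

lemma qReal_le_iff [IsProbabilityMeasure ν] {t x : ℝ} (ht : t ∈ Ioo (0 : ℝ) 1) :
    qReal ν t ≤ x ↔ t ≤ cdf1 ν x := by
  rw [← EReal.coe_le_coe_iff, coe_qReal ν ht, qInvE_cdf1_le_coe_iff ν ht.2.le]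

lemma qInvE_cdf1_map [IsProbabilityMeasure ν] {g : EReal → ℝ} (hg : Monotone g)
    (hgc : Continuous g) {t : ℝ} (ht : t ∈ Ioc (0 : ℝ) 1) :
    qInvE (cdf1 (ν.map fun x : ℝ => g x)) t = (g (qInvE (cdf1 ν) t) : ℝ) := by
  set q := qInvE (cdf1 ν) t
  have ht_le : t ≤ cdfE ν q := le_cdfE_qInvE ν ht.2
  refine qInvE_eq_coe_of_forall_le_iff fun s => ?_
  have hgm : Measurable fun x : ℝ => g x := hgc.measurable.comp measurable_coe_real_ereal
  rw [cdf1_map ν hgm]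
  constructor
  · intro hts
    by_contra! hs
    -- By continuity `s < g x` for some real `x < q`, so `{g ≤ s} ⊆ Iic x`, whose mass is below `t`.
    obtain ⟨l, hlq, hl⟩ := exists_Ioc_subset_of_mem_nhds
      (hgc.continuousAt.eventually (eventually_gt_nhds hs)) ⟨⊥, bot_lt_qInvE_cdf1 ν ht⟩
    obtain ⟨x, hlx, hxq⟩ := EReal.lt_iff_exists_real_btwn.1 hlq
    have hsx : s < g x := hl ⟨hlx, hxq.le⟩
    refine (apply_lt_of_coe_lt_qInvE hxq).not_ge (hts.trans (measureReal_mono fun y hy => ?_))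
    exact EReal.coe_le_coe_iff.1 (hg.reflect_lt (lt_of_le_of_lt hy hsx)).le
  · intro hs
    exact ht_le.trans (measureReal_mono fun y hy => (hg hy).trans hs)

section NullFibers

variable {ν} {g : ℝ → ℝ}

lemma ae_apply_ne_of_map (hg : Measurable g) [NullSingletonClass (ν.map g)] (c : ℝ) :
    ∀ᵐ y ∂ν, g y ≠ c :=
  ae_of_ae_map hg.aemeasurable (Measure.ae_ne (ν.map g) c)

lemma cdf1_map_apply (hg : Monotone g) [NullSingletonClass (ν.map g)] (x : ℝ) :
    cdf1 (ν.map g) (g x) = cdf1 ν x := by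
  rw [cdf1_map ν hg.measurable]
  refine measureReal_congr ?_
  filter_upwards [ae_apply_ne_of_map hg.measurable (g x)] with y hy
  exact propext ⟨fun hyx => (hg.reflect_lt (lt_of_le_of_ne hyx hy)).le, fun hyx => hg hyx⟩

-- If `g s = g x` for some `s < x`, then `g x` is one of the countably many values `g r`, `r ∈ ℚ`.
lemma ae_qInvE_apply (hg : Monotone g) [NullSingletonClass (ν.map g)] :
    ∀ᵐ x ∂ν, qInvE g (g x) = x := by
  have hrat : ∀ᵐ x ∂ν, ∀ r : ℚ, g x ≠ g r :=
    ae_all_iff.2 fun r => ae_apply_ne_of_map hg.measurable (g r)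
  filter_upwards [hrat] with x hx
  refine qInvE_eq_coe_of_forall_le_iff fun s => ⟨fun hs => ?_, fun hs => hg hs⟩
  by_contra! hsx
  obtain ⟨r, hsr, hrx⟩ := exists_rat_btwn hsx
  exact hx r (le_antisymm (hs.trans (hg hsr.le)) (hg hrx.le))

end NullFibers

section Atomless

variable [NullSingletonClass ν]

lemma ae_coe_ne (x : EReal) : ∀ᵐ y : ℝ ∂ν, (y : EReal) ≠ x := by
  filter_upwards [Measure.ae_ne ν x.toReal]
  rintro y hy rfl
  exact hy (EReal.toReal_coe y).symm

lemma continuous_cdfE [IsFiniteMeasure ν] : Continuous (cdfE ν) := by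
  refine continuous_iff_continuousAt.2 fun x => continuousWithinAt_univ _ _ |>.1 ?_
  refine continuousWithinAt_cdfE_of_ae ν ?_
  rw [nhdsWithin_univ]
  filter_upwards [ae_coe_ne ν x] with y hy
  rcases lt_or_gt_of_ne hy with hyx | hxy
  · filter_upwards [Ioi_mem_nhds hyx] with z hz
    exact iff_of_true (le_of_lt hz) hyx.le
  · filter_upwards [Iio_mem_nhds hxy] with z hz
    exact iff_of_false (not_le.2 hz) (not_le.2 hxy)

lemma exists_cdf1_eq [IsProbabilityMeasure ν] {t : ℝ} (ht : t ∈ Ioo (0 : ℝ) 1) :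
    ∃ x, cdf1 ν x = t := by
  obtain ⟨x, rfl⟩ := mem_range_of_exists_le_of_exists_ge (continuous_cdfE ν)
    ⟨⊥, (cdfE_bot ν).trans_le ht.1.le⟩ ⟨⊤, ht.2.le.trans_eq (cdfE_top ν).symm⟩
  induction x with
  | bot => exact absurd ht.1 (cdfE_bot ν).not_gt
  | coe x => exact ⟨x, (cdfE_coe ν x).symm⟩
  | top => exact absurd ht.2 (cdfE_top ν).not_lt

lemma cdf1_qReal [IsProbabilityMeasure ν] {t : ℝ} (ht : t ∈ Ioo (0 : ℝ) 1) :
    cdf1 ν (qReal ν t) = t := by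
  obtain ⟨x, hx⟩ := exists_cdf1_eq ν ht
  refine le_antisymm ?_ ((qReal_le_iff ν ht).1 le_rfl)
  exact (cdf1_mono ν ((qReal_le_iff ν ht).2 hx.ge)).trans_eq hx

lemma measure_eq_zero_of_cdf1_eq [IsFiniteMeasure ν] {s : Set ℝ} (hs : MeasurableSet s)
    (h : ∀ a ∈ s, ∀ b ∈ s, cdf1 ν a = cdf1 ν b) : ν s = 0 := by
  by_contra hpos
  obtain ⟨K, hKs, hK, hK_pos⟩ := hs.exists_lt_isCompact (pos_iff_ne_zero.2 hpos)
  have hK_ne : K.Nonempty := nonempty_of_measure_ne_zero hK_pos.ne'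
  have hab : sInf K ≤ sSup K := csInf_le_csSup hK_ne hK.bddBelow hK.bddAbove
  have hIcc : ν.real (Icc (sInf K) (sSup K)) = 0 := by
    rw [← measureReal_congr Ioc_ae_eq_Icc, ← Iic_sdiff_Iic,
      measureReal_sdiff (Iic_subset_Iic.2 hab) measurableSet_Iic]
    exact sub_eq_zero.2 (h _ (hKs (hK.sSup_mem hK_ne)) _ (hKs (hK.sInf_mem hK_ne)))
  have hKIcc : K ⊆ Icc (sInf K) (sSup K) := subset_Icc_csInf_csSup hK.bddBelow hK.bddAbove
  exact hK_pos.ne' (measure_mono_null hKIcc ((measureReal_eq_zero_iff).1 hIcc))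

lemma nullSingletonClass_map_of_cdf1_eq [IsFiniteMeasure ν] {g : ℝ → ℝ} (hg : Measurable g)
    (h : ∀ x y, g x = g y → cdf1 ν x = cdf1 ν y) : NullSingletonClass (ν.map g) where
  measure_singleton c := by
    rw [Measure.map_apply hg (measurableSet_singleton c)]
    refine measure_eq_zero_of_cdf1_eq ν (hg (measurableSet_singleton c)) fun a ha b hb => ?_
    exact h a b (Eq.trans ha (Eq.symm hb))

instance nullSingletonClass_map_cdf1 [IsFiniteMeasure ν] :
    NullSingletonClass (ν.map (cdf1 ν)) :=
  nullSingletonClass_map_of_cdf1_eq ν (measurable_cdf1 ν) fun _ _ h => h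

lemma ae_qReal_cdf1 [IsFiniteMeasure ν] : ∀ᵐ x ∂ν, qReal ν (cdf1 ν x) = x := by
  filter_upwards [ae_qInvE_apply (cdf1_mono ν)] with x hx
  rw [qReal_eq_toReal_qInvE, hx, EReal.toReal_coe]

lemma cdf1_map_eq_cdfE_qInvE {g : ℝ → ℝ} (hg : Monotone g) [NullSingletonClass (ν.map g)]
    (t : ℝ) : cdf1 (ν.map g) t = cdfE ν (qInvE g t) := by
  rw [cdf1_map ν hg.measurable]
  refine measureReal_congr ?_
  filter_upwards [ae_apply_ne_of_map hg.measurable t, ae_coe_ne ν (qInvE g t)] with y hyt hyq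
  exact propext ⟨fun hy => coe_le_qInvE hg (lt_of_le_of_ne hy hyt),
    fun hy => (apply_lt_of_coe_lt_qInvE (lt_of_le_of_ne hy hyq)).le⟩

end Atomless

end Cdf

section Uniform

lemma ae_uniform01 : ∀ᵐ t ∂uniform01, t ∈ Ioo (0 : ℝ) 1 := by
  rw [uniform01, ← restrict_Ioo_eq_restrict_Icc]
  exact ae_restrict_mem measurableSet_Ioo

instance : IsProbabilityMeasure uniform01 := ⟨by simp [uniform01]⟩

lemma uniform01_Iic {t : ℝ} (ht : t ≤ 1) : uniform01 (Iic t) = ENNReal.ofReal t := by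
  have hinter : Iic t ∩ Icc 0 1 = Icc 0 t := by
    ext x
    exact ⟨fun hx => ⟨hx.2.1, hx.1⟩, fun hx => ⟨hx.2, hx.1, hx.2.trans ht⟩⟩
  rw [uniform01, Measure.restrict_apply measurableSet_Iic, hinter, Real.volume_Icc, sub_zero]

variable (ν : Measure ℝ) [IsProbabilityMeasure ν]

lemma map_qReal_uniform01 : uniform01.map (qReal ν) = ν := by
  have : IsProbabilityMeasure (uniform01.map (qReal ν)) :=
    Measure.isProbabilityMeasure_map (measurable_qReal ν).aemeasurable
  refine Measure.ext_of_Iic _ _ fun x => ?_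
  calc (uniform01.map (qReal ν)) (Iic x)
    _ = uniform01 (qReal ν ⁻¹' Iic x) := Measure.map_apply (measurable_qReal ν) measurableSet_Iic
    _ = uniform01 (Iic (cdf1 ν x)) := measure_congr <| by
        filter_upwards [ae_uniform01] with t ht
        exact propext (qReal_le_iff ν ht)
    _ = ENNReal.ofReal (cdf1 ν x) := uniform01_Iic (cdf1_le_one ν x)
    _ = ν (Iic x) := ENNReal.ofReal_toReal (measure_ne_top ν _)

lemma ae_uniform01_cdf1_qReal [NullSingletonClass ν] :
    ∀ᵐ t ∂uniform01, cdf1 ν (qReal ν t) = t :=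
  ae_uniform01.mono fun _ => cdf1_qReal ν

lemma map_cdf1 [NullSingletonClass ν] : ν.map (cdf1 ν) = uniform01 := by
  calc ν.map (cdf1 ν)
    _ = (uniform01.map (qReal ν)).map (cdf1 ν) := by rw [map_qReal_uniform01]
    _ = uniform01.map fun t => cdf1 ν (qReal ν t) :=
        Measure.map_map (measurable_cdf1 ν) (measurable_qReal ν)
    _ = uniform01.map id := Measure.map_congr (ae_uniform01_cdf1_qReal ν)
    _ = uniform01 := Measure.map_id

end Uniform

section Sklar

variable {μ ν C : Measure (Fin d → ℝ)}

instance [IsProbabilityMeasure μ] (i : Fin d) : IsProbabilityMeasure (marg μ i) :=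
  Measure.isProbabilityMeasure_map (measurable_pi_apply i).aemeasurable

lemma marg_map {f : Fin d → ℝ → ℝ} (hf : ∀ i, Measurable (f i)) (i : Fin d) :
    marg (μ.map fun x j => f j (x j)) i = (marg μ i).map (f i) := by
  rw [marg, marg, Measure.map_map (by fun_prop) (by fun_prop),
    Measure.map_map (hf i) (by fun_prop)]
  rfl

lemma map_eq_self_of_ae_marg {f : Fin d → ℝ → ℝ} (h : ∀ i, ∀ᵐ t ∂(marg μ i), f i t = t) :
    (μ.map fun x i => f i (x i)) = μ := by
  have hae : ∀ᵐ x ∂μ, ∀ i, f i (x i) = x i :=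
    ae_all_iff.2 fun i => ae_of_ae_map (measurable_pi_apply i).aemeasurable (h i)
  calc (μ.map fun x i => f i (x i))
    _ = μ.map id := Measure.map_congr (hae.mono fun _ hx => funext hx)
    _ = μ := Measure.map_id

lemma copulaOf_map {f : Fin d → ℝ → ℝ} [IsProbabilityMeasure μ] (hf : ∀ i, Monotone (f i))
    [∀ i, NullSingletonClass ((marg μ i).map (f i))] :
    copulaOf (μ.map fun x i => f i (x i)) = copulaOf μ := by
  have hfm (i : Fin d) : Measurable (f i) := (hf i).measurable
  have (i : Fin d) : IsProbabilityMeasure ((marg μ i).map (f i)) :=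
    Measure.isProbabilityMeasure_map (hfm i).aemeasurable
  simp only [copulaOf, marg_map hfm]
  rw [Measure.map_map (by fun_prop) (by fun_prop)]
  congr 1
  ext x i
  exact cdf1_map_apply (hf i) (x i)

variable [IsProbabilityMeasure ν] [∀ i, NullSingletonClass (marg ν i)]

lemma isCopula_copulaOf : IsCopula (copulaOf ν) := by
  refine ⟨Measure.isProbabilityMeasure_map (Measurable.aemeasurable (by fun_prop)), fun i => ?_⟩
  rw [copulaOf, marg_map (fun i => measurable_cdf1 (marg ν i)), map_cdf1]

lemma joinCopula_copulaOf : joinCopula (marg ν) (copulaOf ν) = ν := by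
  rw [joinCopula, copulaOf, Measure.map_map (by fun_prop) (by fun_prop)]
  exact map_eq_self_of_ae_marg fun i => ae_qReal_cdf1 (marg ν i)

lemma copulaOf_eq_of_isCopulaOf (hC : IsCopulaOf C ν) : copulaOf ν = C := by
  obtain ⟨⟨-, hunif⟩, hν⟩ := hC
  calc copulaOf ν
    _ = (joinCopula (marg ν) C).map fun x i => cdf1 (marg ν i) (x i) := by rw [← hν, copulaOf]
    _ = C.map fun u i => cdf1 (marg ν i) (qReal (marg ν i) (u i)) :=
        Measure.map_map (by fun_prop) (by fun_prop)
    _ = C := map_eq_self_of_ae_marg fun i => by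
        rw [hunif i]
        exact ae_uniform01_cdf1_qReal (marg ν i)

theorem isCopulaOf_iff : IsCopulaOf C ν ↔ C = copulaOf ν := by
  refine ⟨fun hC => (copulaOf_eq_of_isCopulaOf hC).symm, ?_⟩
  rintro rfl
  exact ⟨isCopula_copulaOf, joinCopula_copulaOf.symm⟩

end Sklar

section Symmetrize

lemma orderStat_eq_of_monotone_comp {x : Fin d → ℝ} {σ : Equiv.Perm (Fin d)}
    (hx : Monotone (x ∘ σ)) : orderStat x = x ∘ σ :=
  (Tuple.comp_sort_eq_comp_iff_monotone.2 hx).symm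

lemma orderStat_comp_perm {x : Fin d → ℝ} (hx : Monotone x) (σ : Equiv.Perm (Fin d)) :
    orderStat (x ∘ σ) = x := by
  have hcancel : (x ∘ σ) ∘ σ.symm = x := by
    ext i
    simp
  rw [orderStat_eq_of_monotone_comp (σ := σ.symm) (by rwa [hcancel]), hcancel]

@[fun_prop]
lemma measurable_orderStat : Measurable (orderStat : (Fin d → ℝ) → Fin d → ℝ) := by
  intro A hA
  have hpre : orderStat ⁻¹' A =
      ⋃ σ : Equiv.Perm (Fin d), (fun x : Fin d → ℝ => x ∘ σ) ⁻¹' ({y | Monotone y} ∩ A) := by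
    ext x
    simp only [mem_preimage, mem_iUnion, mem_inter_iff]
    refine ⟨fun hx => ⟨Tuple.sort x, Tuple.monotone_sort x, hx⟩, ?_⟩
    rintro ⟨σ, hσ, hxA⟩
    rwa [orderStat_eq_of_monotone_comp hσ]
  rw [hpre]
  exact .iUnion fun σ => (isClosed_monotone.measurableSet.inter hA).preimage (by fun_prop)

lemma multidiag_eq_marg (ν : Measure (Fin d → ℝ)) : multidiag ν = marg (ν.map orderStat) := by
  ext1 i
  rw [marg, Measure.map_map (by fun_prop) (by fun_prop)]
  rfl

lemma card_nsmul_sum_perm_apply {α M : Type*} [Fintype α] [DecidableEq α] [AddCommMonoid M]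
    (f : α → M) (i : α) :
    Fintype.card α • ∑ π : Equiv.Perm α, f (π i) = (Fintype.card α).factorial • ∑ j, f j := by
  have hconst (j : α) : ∑ π : Equiv.Perm α, f (π j) = ∑ π : Equiv.Perm α, f (π i) :=
    Fintype.sum_equiv (Equiv.mulRight (Equiv.swap i j)) _ _ fun π => by simp
  calc Fintype.card α • ∑ π : Equiv.Perm α, f (π i)
    _ = ∑ j, ∑ π : Equiv.Perm α, f (π j) := by simp [hconst]
    _ = ∑ π : Equiv.Perm α, ∑ j, f (π j) := Finset.sum_comm
    _ = (Fintype.card α).factorial • ∑ j, f j := by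
        simp [Equiv.sum_comp, Fintype.card_perm]

variable (μ : Measure (Fin d → ℝ))

lemma map_symmetrize {β : Type*} [MeasurableSpace β] {f : (Fin d → ℝ) → β} (hf : Measurable f) :
    (symmetrize μ).map f =
      (d.factorial : ℝ≥0∞)⁻¹ • ∑ π : Equiv.Perm (Fin d), μ.map fun x => f (x ∘ π) := by
  have hperm (π : Equiv.Perm (Fin d)) : Measurable fun (x : Fin d → ℝ) i => x (π i) := by
    fun_prop
  rw [symmetrize, Measure.map_smul, Measure.map_finset_sum' hf.aemeasurable]
  simp only [Measure.map_map hf (hperm _)]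
  rfl

lemma cdf1_marg_symmetrize [IsProbabilityMeasure μ] (i : Fin d) :
    cdf1 (marg (symmetrize μ) i) = Gbar (marg μ) := by
  ext t
  have hsum := card_nsmul_sum_perm_apply (fun j => cdf1 (marg μ j) t) i
  have hd : (d : ℝ) ≠ 0 := Nat.cast_ne_zero.2 i.pos.ne'
  have hfact : (d.factorial : ℝ) ≠ 0 := Nat.cast_ne_zero.2 d.factorial_ne_zero
  have hmarg : marg (symmetrize μ) i =
      (d.factorial : ℝ≥0∞)⁻¹ • ∑ π : Equiv.Perm (Fin d), marg μ (π i) :=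
    map_symmetrize μ (measurable_pi_apply i)
  have hcdf : cdf1 (marg (symmetrize μ) i) t =
      (d.factorial : ℝ)⁻¹ * ∑ π : Equiv.Perm (Fin d), cdf1 (marg μ (π i)) t := by
    simp only [cdf1, hmarg, Measure.smul_apply, Measure.finsetSum_apply, smul_eq_mul,
      ENNReal.toReal_mul, ENNReal.toReal_inv, ENNReal.toReal_natCast,
      ENNReal.toReal_sum fun _ _ => measure_ne_top _ _]
  simp only [Fintype.card_fin, nsmul_eq_mul] at hsum
  rw [hcdf, Gbar]
  field_simp
  linarith

lemma map_symmetrize_of_ae_comp_perm {β : Type*} [MeasurableSpace β] {f h : (Fin d → ℝ) → β}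
    (hf : Measurable f) (hfh : ∀ π : Equiv.Perm (Fin d), ∀ᵐ x ∂μ, f (x ∘ π) = h x) :
    (symmetrize μ).map f = μ.map h := by
  have hd : (d.factorial : ℝ≥0∞) ≠ 0 := Nat.cast_ne_zero.2 d.factorial_ne_zero
  simp only [map_symmetrize μ hf, Measure.map_congr (hfh _), Finset.sum_const, Finset.card_univ,
    Fintype.card_perm, Fintype.card_fin]
  rw [← Nat.cast_smul_eq_nsmul ℝ≥0∞, smul_smul,
    ENNReal.inv_mul_cancel hd (ENNReal.natCast_ne_top _), one_smul]

lemma map_orderStat_map_symmetrize (hμ : ∀ᵐ x ∂μ, Monotone x) {g : ℝ → ℝ} (hg : Monotone g) :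
    ((symmetrize μ).map fun x i => g (x i)).map orderStat = μ.map fun x i => g (x i) := by
  have hgm : Measurable g := hg.measurable
  rw [Measure.map_map (by fun_prop) (by fun_prop)]
  refine map_symmetrize_of_ae_comp_perm μ (by fun_prop) fun π => ?_
  filter_upwards [hμ] with x hx
  exact orderStat_comp_perm (hg.comp hx) π

end Symmetrize

section AverageCdf

variable {F : Fin d → Measure ℝ}

lemma GbarE_coe (x : ℝ) : GbarE F x = Gbar F x := by
  simp only [GbarE, Gbar, cdfE_coe]

variable [∀ i, IsProbabilityMeasure (F i)]

lemma GbarE_mono : Monotone (GbarE F) := fun _ _ hxy =>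
  div_le_div_of_nonneg_right (Finset.sum_le_sum fun i _ => cdfE_mono (F i) hxy) d.cast_nonneg

lemma Gbar_mono : Monotone (Gbar F) := fun _ _ hxy =>
  div_le_div_of_nonneg_right (Finset.sum_le_sum fun i _ => cdf1_mono (F i) hxy) d.cast_nonneg

lemma cdf1_eq_of_Gbar_eq {x y : ℝ} (h : Gbar F x = Gbar F y) (i : Fin d) :
    cdf1 (F i) x = cdf1 (F i) y := by
  wlog hxy : x ≤ y generalizing x y
  · exact (this h.symm (not_le.1 hxy).le).symm
  have hsum : ∑ i, cdf1 (F i) x = ∑ i, cdf1 (F i) y :=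
    (div_left_inj' (Nat.cast_ne_zero.2 i.pos.ne')).1 h
  exact (Finset.sum_eq_sum_iff_of_le fun i _ => cdf1_mono (F i) hxy).1 hsum i (Finset.mem_univ i)

variable [∀ i, NullSingletonClass (F i)]

lemma continuous_GbarE : Continuous (GbarE F) :=
  (continuous_finsetSum _ fun i _ => continuous_cdfE (F i)).div_const _

instance nullSingletonClass_map_Gbar (i : Fin d) : NullSingletonClass ((F i).map (Gbar F)) :=
  nullSingletonClass_map_of_cdf1_eq (F i) Gbar_mono.measurable fun _ _ h =>
    cdf1_eq_of_Gbar_eq h i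

lemma cdf1_mdiagF (i : Fin d) (t : ℝ) :
    cdf1 (mdiagF F i) t = cdfE (F i) (qInvE (Gbar F) t) :=
  cdf1_map_eq_cdfE_qInvE (F i) Gbar_mono t

lemma qInvE_mdiagF (i : Fin d) {t : ℝ} (ht : t ∈ Ioc (0 : ℝ) 1) :
    qInvE (cdf1 (mdiagF F i)) t = (GbarE F (qInvE (cdf1 (F i)) t) : ℝ) := by
  rw [← qInvE_cdf1_map (F i) GbarE_mono continuous_GbarE ht]
  simp only [GbarE_coe]
  rfl

end AverageCdf

section SF

section Law

variable (μ : Measure (Fin d → ℝ)) [IsProbabilityMeasure μ]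

lemma copulaOf_symmetrize :
    copulaOf (symmetrize μ) = (symmetrize μ).map fun x i => Gbar (marg μ) (x i) := by
  simp only [copulaOf, cdf1_marg_symmetrize]

variable [∀ i, NullSingletonClass (marg μ i)]

lemma map_orderStat_SF (hμ : ∀ᵐ x ∂μ, Monotone x) :
    (SF (marg μ) (copulaOf μ)).map orderStat = μ.map fun x i => Gbar (marg μ) (x i) := by
  rw [SF, joinCopula_copulaOf, copulaOf_symmetrize, map_orderStat_map_symmetrize μ hμ Gbar_mono]

lemma multidiag_SF_copulaOf (hμ : ∀ᵐ x ∂μ, Monotone x) :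
    multidiag (SF (marg μ) (copulaOf μ)) = mdiagF (marg μ) := by
  ext1 i
  rw [multidiag_eq_marg, map_orderStat_SF μ hμ, marg_map fun _ => Gbar_mono.measurable, mdiagF]

lemma isCopulaOf_map_orderStat_SF_copulaOf_iff {C : Measure (Fin d → ℝ)}
    (hμ : ∀ᵐ x ∂μ, Monotone x) :
    IsCopulaOf C ((SF (marg μ) (copulaOf μ)).map orderStat) ↔ C = copulaOf μ := by
  have hG : Measurable (Gbar (marg μ)) := Gbar_mono.measurable
  have : IsProbabilityMeasure (μ.map fun x i => Gbar (marg μ) (x i)) :=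
    Measure.isProbabilityMeasure_map (Measurable.aemeasurable (by fun_prop))
  have (i : Fin d) : NullSingletonClass (marg (μ.map fun x i => Gbar (marg μ) (x i)) i) := by
    rw [marg_map fun _ => hG]
    infer_instance
  rw [map_orderStat_SF μ hμ, isCopulaOf_iff, copulaOf_map fun _ => Gbar_mono]

end Law

variable {F : Fin d → Measure ℝ} {C C' : Measure (Fin d → ℝ)}

lemma IsCdfOS.ae_monotone {μ : Measure (Fin d → ℝ)} (hμ : IsCdfOS F μ) :
    ∀ᵐ x ∂μ, Monotone x := by
  have := hμ.1
  exact (prob_compl_eq_zero_iff isClosed_monotone.measurableSet).2 hμ.2.1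

variable [∀ i, NullSingletonClass (F i)]

lemma multidiag_SF (hC : C ∈ copulaOS F) : multidiag (SF F C) = mdiagF F := by
  obtain ⟨μ, hμ, rfl⟩ := hC
  obtain rfl : marg μ = F := funext hμ.2.2
  have := hμ.1
  exact multidiag_SF_copulaOf μ hμ.ae_monotone

lemma isCopulaOf_map_orderStat_SF_iff (hC : C ∈ copulaOS F) :
    IsCopulaOf C' ((SF F C).map orderStat) ↔ C' = C := by
  obtain ⟨μ, hμ, rfl⟩ := hC
  obtain rfl : marg μ = F := funext hμ.2.2
  have := hμ.1
  exact isCopulaOf_map_orderStat_SF_copulaOf_iff μ hμ.ae_monotone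

end SF

/-- Lemma `lem:delta_SFC`.  Let `F = (F_1, …, F_d)` be a `d`-tuple of
continuous cdfs on `ℝ` with `F_{i-1} ≥ F_i` pointwise, let `C ∈ C^OS(F)`, and consider the
multidiagonal `δ^F = (δ_(1), …, δ_(d))` of `S_F(C)` (the one-dimensional marginal cdfs of the
order statistics `U^OS` of `U ∼ S_F(C)`).  Then `δ^F` does not depend on `C`, it satisfies
`δ_(i) = F_i ∘ G^{-1}` and `δ_(i)^{-1} = G ∘ F_i^{-1}` for all `i`, where
`G = (1/d) ∑ F_i`.  Furthermore `C` is the unique copula of `U^OS`. -/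
theorem stmt_10 {d : ℕ} [NeZero d] (F : Fin d → Measure ℝ) (hF : IsMargOS F)
    (C : Measure (Fin d → ℝ)) (hC : C ∈ copulaOS F) :
    (∀ C' : Measure (Fin d → ℝ), C' ∈ copulaOS F →
      multidiag (SF F C') = multidiag (SF F C)) ∧
    (∀ (i : Fin d) (t : ℝ), cdf1 (multidiag (SF F C) i) t = cdfE (F i) (qInvE (Gbar F) t)) ∧
    (∀ i : Fin d, ∀ t ∈ Ioc (0 : ℝ) 1,
      qInvE (cdf1 (multidiag (SF F C) i)) t
        = ((GbarE F (qInvE (cdf1 (F i)) t) : ℝ) : EReal)) ∧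
    IsCopulaOf C ((SF F C).map orderStat) ∧
    ∀ C'' : Measure (Fin d → ℝ), IsCopulaOf C'' ((SF F C).map orderStat) → C'' = C := by
  have := hF.prob
  have (i : Fin d) : NullSingletonClass (F i) := ⟨hF.cont i⟩
  refine ⟨fun C' hC' => ?_, fun i t => ?_, fun i t ht => ?_, ?_, fun C'' hC'' => ?_⟩
  · rw [multidiag_SF hC', multidiag_SF hC]
  · rw [multidiag_SF hC, cdf1_mdiagF]
  · rw [multidiag_SF hC, qInvE_mdiagF i ht]
  · exact (isCopulaOf_map_orderStat_SF_iff hC).2 rfl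
  · exact (isCopulaOf_map_orderStat_SF_iff hC).1 hC''

end MaxEntOS
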